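/- arXiv:2507.07546 — 3 statements merged into one kernel-verified Lean document; each statement's English description precedes it below -/
import Mathlib

section
/- Generalized anisotropic Gagliardo–Nirenberg inequality on the torus: There exists a constant C such that for every smooth function u : ℝ³ → ℝ that is 2-periodic in each of its three variables, ( ∫_{−1}^{1} ‖u(·, z)‖_{L⁴([−1,1]²)}² dz )^{1/2} ≤ C ( ‖u‖_{L²([−1,1]³)}^{1/2} ‖∇_h u‖_{L²([−1,1]³)}^{1/2} + ‖u‖_{L²([−1,1]³)} ). -/
open MeasureTheory Set

/-!
The inequality is Ladyzhenskaya's inequality on horizontal slices, integrated in `z`.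

For a `C¹` function `g` on `[-1,1]`, averaging `g(x)² = g(t)² + ∫_t^x 2 g g'` over `t` gives
`g(x)² ≤ ∫ (g²/2 + 2 |g| |g'|)` (`sq_le_integral`).  For a function `f` of two variables with
`h = f²/2 + 2 |f| |∇f|`, this bounds `f(x,y)²` both by `∫ h(s,y) ds` and by `∫ h(x,t) dt`; multiplying
the two bounds and integrating, Fubini's theorem gives `∬ f⁴ ≤ (∬ h)²` (`slice_bound`).
Hence `∫ ‖u(·,z)‖²_{L⁴} dz ≤ ∭ (u²/2 + 2 |u| |∇_h u|)`, and the Cauchy–Schwarz inequality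
(`integral_mul_le_sqrt`) bounds the right side by `a²/2 + 2ab`, where `a = ‖u‖_{L²}` and
`b = ‖∇_h u‖_{L²}`; finally `(a²/2 + 2ab)^{1/2} ≤ 2 (a^{1/2} b^{1/2} + a)`.
-/

/-- Lebesgue measure on `[-1,1]`, as a measure on `ℝ`. -/
noncomputable abbrev boxMeasure : Measure ℝ := volume.restrict (Icc (-1:ℝ) 1)

lemma integrable_box {f : ℝ → ℝ} (hf : Continuous f) : Integrable f boxMeasure :=
  hf.continuousOn.integrableOn_compact isCompact_Icc

lemma integrable_box_two {f : ℝ × ℝ → ℝ} (hf : Continuous f) :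
    Integrable f (boxMeasure.prod boxMeasure) := by
  rw [Measure.prod_restrict]
  exact hf.continuousOn.integrableOn_compact (isCompact_Icc.prod isCompact_Icc)

lemma integrable_box_three {f : ℝ × ℝ × ℝ → ℝ} (hf : Continuous f) :
    Integrable f (boxMeasure.prod (boxMeasure.prod boxMeasure)) := by
  rw [Measure.prod_restrict, Measure.prod_restrict]
  exact hf.continuousOn.integrableOn_compact
    (isCompact_Icc.prod (isCompact_Icc.prod isCompact_Icc))

lemma integral_box_three {f : ℝ × ℝ × ℝ → ℝ} (hf : Continuous f) :
    ∫ z in Icc (-1:ℝ) 1, ∫ x in Icc (-1:ℝ) 1, ∫ y in Icc (-1:ℝ) 1, f (z, x, y)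
      = ∫ p, f p ∂(boxMeasure.prod (boxMeasure.prod boxMeasure)) := by
  rw [integral_prod f (integrable_box_three hf)]
  refine integral_congr_ae (Filter.Eventually.of_forall fun z => ?_)
  exact (integral_prod (fun q : ℝ × ℝ => f (z, q))
    (integrable_box_two (hf.comp (by fun_prop)))).symm

/-- One-dimensional Agmon-type bound; `h` is any continuous majorant of `g²/2 + 2 |g| |g'|`. -/
lemma sq_le_integral {g g' h : ℝ → ℝ} (hg : ∀ x, HasDerivAt g (g' x) x)
    (hg' : Continuous g') (hh : Continuous h)
    (hle : ∀ x, g x ^ 2 / 2 + 2 * (|g x| * |g' x|) ≤ h x) {x : ℝ} (hx : x ∈ Icc (-1:ℝ) 1) :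
    g x ^ 2 ≤ ∫ t, h t ∂boxMeasure := by
  have hgc : Continuous g := continuous_iff_continuousAt.2 fun x => (hg x).continuousAt
  set K := ∫ t, 2 * (|g t| * |g' t|) ∂boxMeasure with hK
  have key : ∀ t ∈ Icc (-1:ℝ) 1, g x ^ 2 ≤ g t ^ 2 + K := by
    intro t ht
    have hd : ∀ s ∈ uIcc t x, HasDerivAt (fun s => g s ^ 2) (2 * g s * g' s) s := by
      intro s _
      have h0 := (hg s).pow 2
      simp only [Nat.cast_ofNat, Nat.add_one_sub_one, pow_one] at h0
      exact h0
    have hc : Continuous fun s => 2 * g s * g' s := by fun_prop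
    have h1 := intervalIntegral.integral_eq_sub_of_hasDerivAt hd (hc.intervalIntegrable _ _)
    have h2 : ‖∫ s in t..x, 2 * g s * g' s‖ ≤ ∫ s in uIoc t x, ‖2 * g s * g' s‖ :=
      intervalIntegral.norm_integral_le_integral_norm_uIoc
    have h3 : ∫ s in uIoc t x, ‖2 * g s * g' s‖ ≤ ∫ s, ‖2 * g s * g' s‖ ∂boxMeasure := by
      refine setIntegral_mono_set (integrable_box hc.norm)
        (Filter.Eventually.of_forall fun s => norm_nonneg _) (LE.le.eventuallyLE ?_)
      exact uIoc_subset_uIcc.trans (uIcc_subset_Icc ht hx)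
    have h4 : ∫ s, ‖2 * g s * g' s‖ ∂boxMeasure = K := by
      rw [hK]
      congr 1
      ext s
      simp [mul_assoc]
    have h5 := le_abs_self (∫ s in t..x, 2 * g s * g' s)
    rw [Real.norm_eq_abs] at h2
    linarith
  have hvol : boxMeasure.real univ = 2 := by
    norm_num [boxMeasure, Measure.real]
  have i1 : Integrable (fun t => g t ^ 2) boxMeasure := integrable_box (by fun_prop)
  have i2 : Integrable (fun t => 2 * (|g t| * |g' t|)) boxMeasure := integrable_box (by fun_prop)
  have hint : ∫ _t, g x ^ 2 ∂boxMeasure ≤ ∫ t, (g t ^ 2 + K) ∂boxMeasure :=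
    setIntegral_mono_on (integrable_const _) (i1.add (integrable_const _)) measurableSet_Icc key
  rw [integral_add i1 (integrable_const _), integral_const, integral_const, hvol] at hint
  have hfin : ∫ t, (g t ^ 2 / 2 + 2 * (|g t| * |g' t|)) ∂boxMeasure ≤ ∫ t, h t ∂boxMeasure :=
    integral_mono ((i1.div_const 2).add i2) (integrable_box hh) hle
  rw [integral_add (i1.div_const 2) i2, integral_div] at hfin
  simp only [smul_eq_mul] at hint
  linarith

/-- Ladyzhenskaya's inequality on the square, with `h` a continuous majorant of
`f²/2 + 2 |f| |∂ᵢ f|` for both `i`. -/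
lemma slice_bound {f fx fy h : ℝ × ℝ → ℝ} (hf : Continuous f) (hfx : Continuous fx)
    (hfy : Continuous fy) (hh : Continuous h)
    (hdx : ∀ x y, HasDerivAt (fun t => f (t, y)) (fx (x, y)) x)
    (hdy : ∀ x y, HasDerivAt (fun t => f (x, t)) (fy (x, y)) y)
    (hlx : ∀ p, f p ^ 2 / 2 + 2 * (|f p| * |fx p|) ≤ h p)
    (hly : ∀ p, f p ^ 2 / 2 + 2 * (|f p| * |fy p|) ≤ h p) :
    (∫ x in Icc (-1:ℝ) 1, ∫ y in Icc (-1:ℝ) 1, f (x, y) ^ 4)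
      ≤ (∫ x in Icc (-1:ℝ) 1, ∫ y in Icc (-1:ℝ) 1, h (x, y)) ^ 2 := by
  have hi := integrable_box_two hh
  set P : ℝ → ℝ := fun y => ∫ s, h (s, y) ∂boxMeasure with hP
  set Q : ℝ → ℝ := fun x => ∫ t, h (x, t) ∂boxMeasure with hQ
  have hPi : Integrable P boxMeasure := hi.integral_prod_right
  have hQi : Integrable Q boxMeasure := hi.integral_prod_left
  have hPQ : ∫ y, P y ∂boxMeasure = ∫ x, Q x ∂boxMeasure :=
    (integral_integral_swap (f := fun x y => h (x, y)) hi).symm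
  have hbx : ∀ x ∈ Icc (-1:ℝ) 1, ∀ y, f (x, y) ^ 2 ≤ P y := fun x hx y =>
    sq_le_integral (g := fun t => f (t, y)) (g' := fun t => fx (t, y)) (fun t => hdx t y)
      (by fun_prop) (by fun_prop) (fun t => hlx (t, y)) hx
  have hby : ∀ x, ∀ y ∈ Icc (-1:ℝ) 1, f (x, y) ^ 2 ≤ Q x := fun x y hy =>
    sq_le_integral (g := fun t => f (x, t)) (g' := fun t => fy (x, t)) (fun t => hdy x t)
      (by fun_prop) (by fun_prop) (fun t => hly (x, t)) hy
  have hin : ∀ x ∈ Icc (-1:ℝ) 1,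
      ∫ y in Icc (-1:ℝ) 1, f (x, y) ^ 4 ≤ Q x * ∫ y, P y ∂boxMeasure := by
    intro x hx
    rw [← integral_const_mul]
    refine setIntegral_mono_on (integrable_box (by fun_prop)) (hPi.const_mul _)
      measurableSet_Icc fun y hy => ?_
    have h1 := hbx x hx y
    have h2 := hby x y hy
    calc f (x, y) ^ 4 = f (x, y) ^ 2 * f (x, y) ^ 2 := by ring
      _ ≤ Q x * P y := mul_le_mul h2 h1 (sq_nonneg _) ((sq_nonneg _).trans h2)
  have hf4 : Integrable (fun p => f p ^ 4) (boxMeasure.prod boxMeasure) :=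
    integrable_box_two (by fun_prop)
  calc (∫ x in Icc (-1:ℝ) 1, ∫ y in Icc (-1:ℝ) 1, f (x, y) ^ 4)
      ≤ ∫ x in Icc (-1:ℝ) 1, Q x * ∫ y, P y ∂boxMeasure :=
        setIntegral_mono_on hf4.integral_prod_left (hQi.mul_const _) measurableSet_Icc hin
    _ = (∫ x, Q x ∂boxMeasure) ^ 2 := by rw [integral_mul_const, hPQ, sq]

/-- Cauchy–Schwarz, read off from the discriminant of `t ↦ ∫ (t v - w)² ≥ 0`. -/
lemma integral_mul_le_sqrt {α : Type*} [MeasurableSpace α] {μ : Measure α} {v w : α → ℝ}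
    (hv : Integrable (fun p => v p ^ 2) μ) (hw : Integrable (fun p => w p ^ 2) μ)
    (hvw : Integrable (fun p => v p * w p) μ) :
    ∫ p, v p * w p ∂μ ≤ √(∫ p, v p ^ 2 ∂μ) * √(∫ p, w p ^ 2 ∂μ) := by
  have hq : ∀ t : ℝ, 0 ≤ (∫ p, v p ^ 2 ∂μ) * (t * t) + (-2 * ∫ p, v p * w p ∂μ) * t
      + ∫ p, w p ^ 2 ∂μ := by
    intro t
    have h0 : 0 ≤ ∫ p, (t * v p - w p) ^ 2 ∂μ := integral_nonneg fun p => sq_nonneg _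
    have he : (fun p => (t * v p - w p) ^ 2)
        = fun p => (t * t) * v p ^ 2 + (-2 * t) * (v p * w p) + w p ^ 2 := by
      ext p; ring
    have hi : Integrable (fun p => (t * t) * v p ^ 2 + (-2 * t) * (v p * w p)) μ :=
      (hv.const_mul _).add (hvw.const_mul _)
    rw [he, integral_add hi hw,
      integral_add (hv.const_mul _) (hvw.const_mul _), integral_const_mul,
      integral_const_mul] at h0
    linarith
  have hd := discrim_le_zero hq
  rw [discrim] at hd
  rw [← Real.sqrt_mul (integral_nonneg fun p => sq_nonneg _)]
  apply Real.le_sqrt_of_sq_le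
  linarith

/-- **Generalized anisotropic Gagliardo–Nirenberg inequality on the three-dimensional
torus**: `‖u‖_{L²_z(L⁴_{x_h})} ≤ C (‖u‖_{L²}^{1/2} ‖∇_h u‖_{L²}^{1/2} + ‖u‖_{L²})`. -/
theorem gagliardo_nirenberg_anisotropic_torus :
    ∃ C : ℝ, ∀ u : ℝ × ℝ × ℝ → ℝ, ContDiff ℝ (⊤ : ℕ∞) u →
      (∀ x y z : ℝ, u (x + 2, y, z) = u (x, y, z)) →
      (∀ x y z : ℝ, u (x, y + 2, z) = u (x, y, z)) →
      (∀ x y z : ℝ, u (x, y, z + 2) = u (x, y, z)) →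
      (∫ z in Icc (-1:ℝ) 1,
          (∫ x in Icc (-1:ℝ) 1, ∫ y in Icc (-1:ℝ) 1,
            (u (x, y, z)) ^ 4) ^ ((1:ℝ)/2)) ^ ((1:ℝ)/2)
        ≤ C * (((∫ z in Icc (-1:ℝ) 1, ∫ x in Icc (-1:ℝ) 1, ∫ y in Icc (-1:ℝ) 1,
                (u (x, y, z)) ^ 2) ^ ((1:ℝ)/2)) ^ ((1:ℝ)/2)
              * ((∫ z in Icc (-1:ℝ) 1, ∫ x in Icc (-1:ℝ) 1, ∫ y in Icc (-1:ℝ) 1,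
                ((deriv (fun t => u (t, y, z)) x) ^ 2
                  + (deriv (fun t => u (x, t, z)) y) ^ 2)) ^ ((1:ℝ)/2)) ^ ((1:ℝ)/2)
              + (∫ z in Icc (-1:ℝ) 1, ∫ x in Icc (-1:ℝ) 1, ∫ y in Icc (-1:ℝ) 1,
                (u (x, y, z)) ^ 2) ^ ((1:ℝ)/2)) := by
  refine ⟨2, fun u hu _ _ _ => ?_⟩
  have huc : Continuous u := hu.continuous
  have hud : Differentiable ℝ u := hu.differentiable (by simp)
  have hfd : Continuous (fderiv ℝ u) := hu.continuous_fderiv (by simp)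
  -- The variables are reordered as `(z, x, y)`, the order of the iterated integrals.
  let U : ℝ × ℝ × ℝ → ℝ := fun p => u (p.2.1, p.2.2, p.1)
  let Ux : ℝ × ℝ × ℝ → ℝ := fun p => fderiv ℝ u (p.2.1, p.2.2, p.1) (1, 0, 0)
  let Uy : ℝ × ℝ × ℝ → ℝ := fun p => fderiv ℝ u (p.2.1, p.2.2, p.1) (0, 1, 0)
  let G : ℝ × ℝ × ℝ → ℝ := fun p => √(Ux p ^ 2 + Uy p ^ 2)
  let H : ℝ × ℝ × ℝ → ℝ := fun p => U p ^ 2 / 2 + 2 * (|U p| * G p)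
  have hU : Continuous U := huc.comp (by fun_prop)
  have hUx : Continuous Ux := (hfd.comp (by fun_prop)).clm_apply continuous_const
  have hUy : Continuous Uy := (hfd.comp (by fun_prop)).clm_apply continuous_const
  have hG : Continuous G := by fun_prop
  have hH : Continuous H := by fun_prop
  have hdx : ∀ z x y, HasDerivAt (fun t => U (z, t, y)) (Ux (z, x, y)) x := by
    intro z x y
    have h1 : HasDerivAt (fun t : ℝ => ((t, y, z) : ℝ × ℝ × ℝ)) (1, 0, 0) x :=
      (hasDerivAt_id x).prodMk ((hasDerivAt_const x y).prodMk (hasDerivAt_const x z))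
    exact (hud (x, y, z)).hasFDerivAt.comp_hasDerivAt x h1
  have hdy : ∀ z x y, HasDerivAt (fun t => U (z, x, t)) (Uy (z, x, y)) y := by
    intro z x y
    have h1 : HasDerivAt (fun t : ℝ => ((x, t, z) : ℝ × ℝ × ℝ)) (0, 1, 0) y :=
      (hasDerivAt_const y x).prodMk ((hasDerivAt_id y).prodMk (hasDerivAt_const y z))
    exact (hud (x, y, z)).hasFDerivAt.comp_hasDerivAt y h1
  have hGx : ∀ p, |Ux p| ≤ G p := fun p =>
    Real.abs_le_sqrt (le_add_of_nonneg_right (sq_nonneg _))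
  have hGy : ∀ p, |Uy p| ≤ G p := fun p =>
    Real.abs_le_sqrt (le_add_of_nonneg_left (sq_nonneg _))
  have hG2 : ∀ p, G p ^ 2 = Ux p ^ 2 + Uy p ^ 2 := fun p => Real.sq_sqrt (by positivity)
  have hH0 : ∀ p, 0 ≤ H p := fun p => by
    have : 0 ≤ G p := Real.sqrt_nonneg _
    positivity
  set M := boxMeasure.prod (boxMeasure.prod boxMeasure) with hM
  have hA : ∫ z in Icc (-1:ℝ) 1, ∫ x in Icc (-1:ℝ) 1, ∫ y in Icc (-1:ℝ) 1, u (x, y, z) ^ 2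
      = ∫ p, U p ^ 2 ∂M := integral_box_three (f := fun p => U p ^ 2) (by fun_prop)
  have hB : ∫ z in Icc (-1:ℝ) 1, ∫ x in Icc (-1:ℝ) 1, ∫ y in Icc (-1:ℝ) 1,
      ((deriv (fun t => u (t, y, z)) x) ^ 2 + (deriv (fun t => u (x, t, z)) y) ^ 2)
      = ∫ p, G p ^ 2 ∂M := by
    rw [hM, ← integral_box_three (f := fun p => G p ^ 2) (by fun_prop)]
    have ex : ∀ x y z, deriv (fun t => u (t, y, z)) x = Ux (z, x, y) :=
      fun x y z => (hdx z x y).deriv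
    have ey : ∀ x y z, deriv (fun t => u (x, t, z)) y = Uy (z, x, y) :=
      fun x y z => (hdy z x y).deriv
    simp only [ex, ey, hG2]
  have hS : ∫ z in Icc (-1:ℝ) 1, √(∫ x in Icc (-1:ℝ) 1, ∫ y in Icc (-1:ℝ) 1, u (x, y, z) ^ 4)
      ≤ ∫ p, H p ∂M := by
    rw [hM, ← integral_box_three hH]
    have hHi : Integrable
        (fun z => ∫ x in Icc (-1:ℝ) 1, ∫ y in Icc (-1:ℝ) 1, H (z, x, y)) boxMeasure := by
      refine (integrable_box_three hH).integral_prod_left.congr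
        (Filter.Eventually.of_forall fun z => ?_)
      exact integral_prod (fun q : ℝ × ℝ => H (z, q))
        (integrable_box_two (hH.comp (by fun_prop)))
    refine integral_mono_of_nonneg (Filter.Eventually.of_forall fun z => Real.sqrt_nonneg _)
      hHi (Filter.Eventually.of_forall fun z => ?_)
    refine Real.sqrt_le_iff.2
      ⟨integral_nonneg fun x => integral_nonneg fun y => hH0 _, ?_⟩
    refine slice_bound (f := fun q => U (z, q)) (fx := fun q => Ux (z, q))
      (fy := fun q => Uy (z, q)) (h := fun q => H (z, q)) (by fun_prop) (by fun_prop)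
      (by fun_prop) (by fun_prop) (hdx z) (hdy z) (fun q => ?_) (fun q => ?_)
    · have := mul_le_mul_of_nonneg_left (hGx (z, q)) (abs_nonneg (U (z, q)))
      show _ ≤ U (z, q) ^ 2 / 2 + 2 * (|U (z, q)| * G (z, q))
      linarith
    · have := mul_le_mul_of_nonneg_left (hGy (z, q)) (abs_nonneg (U (z, q)))
      show _ ≤ U (z, q) ^ 2 / 2 + 2 * (|U (z, q)| * G (z, q))
      linarith
  have iU : Integrable (fun p => U p ^ 2) M := integrable_box_three (by fun_prop)
  have iG : Integrable (fun p => G p ^ 2) M := integrable_box_three (by fun_prop)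
  have iUG : Integrable (fun p => |U p| * G p) M := integrable_box_three (by fun_prop)
  have hCS := integral_mul_le_sqrt (v := fun p => |U p|) (by simpa only [sq_abs] using iU) iG iUG
  simp only [sq_abs] at hCS
  have hHs : ∫ p, H p ∂M = (∫ p, U p ^ 2 ∂M) / 2 + 2 * ∫ p, |U p| * G p ∂M := by
    rw [← integral_div, ← integral_const_mul]
    exact integral_add (iU.div_const 2) (iUG.const_mul 2)
  simp only [← Real.sqrt_eq_rpow]
  rw [hA, hB]
  have hA0 : 0 ≤ ∫ p, U p ^ 2 ∂M := integral_nonneg fun p => sq_nonneg _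
  set a := √(∫ p, U p ^ 2 ∂M) with ha
  set b := √(∫ p, G p ^ 2 ∂M) with hb
  have haa : ∫ p, U p ^ 2 ∂M = a ^ 2 := (Real.sq_sqrt hA0).symm
  have ha0 : 0 ≤ a := Real.sqrt_nonneg _
  have hb0 : 0 ≤ b := Real.sqrt_nonneg _
  have hab : (√a * √b) ^ 2 = a * b := by rw [mul_pow, Real.sq_sqrt ha0, Real.sq_sqrt hb0]
  have hab0 : 0 ≤ √a * √b := by positivity
  refine Real.sqrt_le_iff.2 ⟨by positivity, ?_⟩
  rw [hHs, haa] at hS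
  nlinarith [mul_nonneg ha0 hab0, mul_nonneg ha0 hb0, sq_nonneg a]
end

section
/- Bernstein integrability-gain inequality for vertically band-limited functions: Let 0 < a < b, 1 ≤ p ≤ ∞ and 1 ≤ r′ ≤ r ≤ ∞. There exists a constant C, depending only on a and b, with the following property. Let q ∈ ℕ and let u(x_h, z) = ∑_{n ∈ ℤ, a·2^q ≤ |n| ≤ b·2^q} c_n(x_h) e^{iπ n z} be a finite trigonometric sum in the vertical variable z ∈ [−1,1], where each coefficient c_n : ℝ² → ℂ is measurable with ‖u‖_{L^{r′}_z(L^p_{x_h})} < ∞. Then ‖u‖_{L^r_z(L^p_{x_h})} ≤ C 2^{q(1/r′ − 1/r)} ‖u‖_{L^{r′}_z(L^p_{x_h})}. -/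
/-!
Write `F z = ‖u(·, z)‖_{L^p}` and let `N = ⌊b 2^q⌋`, `M = 4N + 1`. The case `r = ∞` carries
everything: if `F ≤ L ‖F‖_{L^{r'}}` everywhere with `L = C 2^{q/r'}`, then
`∫ F^r ≤ (sup F)^{r - r'} ∫ F^{r'}` gives the bound for finite `r` (`interpolate_sup`).

For the uniform bound, let `V = D_{2N} D_N / (2N + 1)` be a normalised product of Dirichlet
kernels, whose Fourier coefficients equal `1` on `|n| ≤ N`. On any shifted grid
`y_j = s + 2j/M`, `j < M`, orthogonality of characters is exact for all the frequencies involved,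
so `u(·, z) = M⁻¹ ∑_j V(z - y_j) u(·, y_j)` (`vpKer_reproduce`), while Parseval on the grid gives
`M⁻¹ ∑_j |V(z - y_j)| ≤ 3` (`sum_norm_vpKer_le`). As the sum is finite, the ordinary triangle
inequality in `L^p` yields
`F z ≤ 3 max_j F(y_j) ≤ 3 (∑_j F(y_j)^{r'})^{1/r'}`, with no need for Minkowski's integral
inequality. Raising to the power `r'` and averaging over shifts `s` in an interval of length `2/M`
turns the grid sum into `∫_{-1}^1 F^{r'}` (`sup_bound_of_sampling`), whence
`F z ≤ 3 (M/2)^{1/r'} ‖F‖_{L^{r'}}` with `M/2 ≤ (2b + 1) 2^q`.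
-/

open MeasureTheory ENNReal Set

/-- The `L^p` norm (valued in `ℝ≥0∞`) of an `ℝ≥0∞`-valued function, with the usual
essential-supremum convention for `p = ∞`. -/
noncomputable def mixedLpNorm {α : Type*} [MeasurableSpace α] (μ : Measure α)
    (p : ℝ≥0∞) (g : α → ℝ≥0∞) : ℝ≥0∞ :=
  if p = ∞ then essSup g μ else (∫⁻ a, g a ^ p.toReal ∂μ) ^ (1 / p.toReal)

/-- The anisotropic mixed norm `‖u‖_{L^r_z(L^p_{x_h})}` on `ℝ² × [−1,1]`: first the
`L^p` norm in the horizontal variable `x_h ∈ ℝ²`, then the `L^r` norm in `z ∈ [−1,1]`. -/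
noncomputable def normLrVLpH (r p : ℝ≥0∞) (u : (ℝ × ℝ) × ℝ → ℂ) : ℝ≥0∞ :=
  mixedLpNorm ((volume : Measure ℝ).restrict (Icc (-1:ℝ) 1)) r fun z =>
    mixedLpNorm (volume : Measure (ℝ × ℝ)) p fun xh => (‖u (xh, z)‖₊ : ℝ≥0∞)

/-! ### Dirichlet kernels on a grid -/

/-- The vertical exponential `e^{iπ n t}`. -/
noncomputable def vexp (n : ℤ) (t : ℝ) : ℂ :=
  Complex.exp ((Real.pi : ℂ) * Complex.I * n * t)

lemma vexp_add (n m : ℤ) (t : ℝ) : vexp (n + m) t = vexp n t * vexp m t := by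
  simp only [vexp, ← Complex.exp_add]; push_cast; ring_nf

lemma vexp_add_right (n : ℤ) (s t : ℝ) : vexp n (s + t) = vexp n s * vexp n t := by
  simp only [vexp, ← Complex.exp_add]; push_cast; ring_nf

lemma norm_vexp (n : ℤ) (t : ℝ) : ‖vexp n t‖ = 1 := by
  have : (Real.pi : ℂ) * Complex.I * n * t = ((Real.pi * n * t : ℝ) : ℂ) * Complex.I := by
    push_cast; ring
  rw [vexp, this, Complex.norm_exp_ofReal_mul_I]

lemma vexp_zero_right (n : ℤ) : vexp n 0 = 1 := by simp [vexp]

lemma vexp_neg_right (n : ℤ) (t : ℝ) : vexp n (-t) = (starRingEnd ℂ) (vexp n t) := by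
  simp only [vexp, ← Complex.exp_conj]
  simp

lemma continuous_vexp (n : ℤ) : Continuous (vexp n) := by
  unfold vexp; fun_prop

/-- Orthogonality of characters on the grid of mesh `2/M`. -/
lemma sum_vexp_grid (M : ℕ) (hM : 0 < M) (k : ℤ) (hk : |k| < M) :
    ∑ j ∈ Finset.range M, vexp k (2 * j / M) = if k = 0 then (M : ℂ) else 0 := by
  have hM' : (M : ℂ) ≠ 0 := by exact_mod_cast hM.ne'
  split_ifs with h
  · simp [h, vexp]
  · set ζ : ℂ := Complex.exp (2 * Real.pi * Complex.I * k / M) with hζ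
    have h1 : ∀ j : ℕ, vexp k (2 * j / M) = ζ ^ j := by
      intro j
      rw [hζ, ← Complex.exp_nat_mul, vexp]
      congr 1; push_cast; field_simp
    have h2 : ζ ^ M = 1 := by
      rw [hζ, ← Complex.exp_nat_mul, Complex.exp_eq_one_iff]
      exact ⟨k, by field_simp⟩
    have h3 : ζ ≠ 1 := by
      intro h0
      rw [hζ, Complex.exp_eq_one_iff] at h0
      obtain ⟨n, hn⟩ := h0
      have hpi : (2 * Real.pi * Complex.I : ℂ) ≠ 0 := Complex.two_pi_I_ne_zero
      have h4 : (k : ℂ) = n * M := by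
        field_simp at hn
        have := mul_left_cancel₀ hpi (a := (2 * Real.pi * Complex.I : ℂ)) (b := (k:ℂ)) (c := n * M)
          (by linear_combination (2 * Real.pi * Complex.I : ℂ) * hn)
        exact this
      have h5 : k = n * M := by exact_mod_cast h4
      have hn0 : n ≠ 0 := by rintro rfl; simp at h5; exact h h5
      have : (1 : ℤ) ≤ |n| := Int.one_le_abs hn0
      rw [h5, abs_mul, Nat.abs_cast] at hk
      nlinarith
    simp_rw [h1]
    have := mul_geom_sum ζ M
    rw [h2, sub_self] at this
    exact (mul_eq_zero.mp this).resolve_left (sub_ne_zero.mpr h3)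

/-- The Dirichlet kernel of degree `A` for the frequencies `πk`. -/
noncomputable def dirichletKer (A : ℕ) (t : ℝ) : ℂ :=
  ∑ k ∈ Finset.Icc (-(A : ℤ)) A, vexp k t

/-- Sampling with the Dirichlet kernel on a grid of `M > 2A` points shifted by `s` reproduces
every exponential of degree at most `A`. -/
lemma dirichletKer_reproduce (A M : ℕ) (hM : 2 * A < M) (m : ℤ) (hm : |m| ≤ A) (s z : ℝ) :
    ∑ j ∈ Finset.range M, dirichletKer A (z - (s + 2 * j / M)) * vexp m (s + 2 * j / M)
      = M * vexp m z := by
  have key : ∀ k : ℤ, ∀ y : ℝ, vexp k (z - (s + y)) * vexp m (s + y)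
      = (vexp k (z - s) * vexp m s) * vexp (m - k) y := by
    intro k y
    simp only [vexp, ← Complex.exp_add]; push_cast; ring_nf
  simp only [dirichletKer, Finset.sum_mul, key]
  rw [Finset.sum_comm]
  simp only [← Finset.mul_sum]
  have hm' := abs_le.mp hm
  have : ∀ k ∈ Finset.Icc (-(A : ℤ)) A,
      vexp k (z - s) * vexp m s * ∑ j ∈ Finset.range M, vexp (m - k) (2 * j / M)
        = if k = m then (M : ℂ) * vexp m z else 0 := by
    intro k hk
    rw [Finset.mem_Icc] at hk
    rw [sum_vexp_grid M (by omega) (m - k) (by rw [abs_lt]; omega)]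
    by_cases h : k = m
    · subst h
      simp only [sub_self, if_true, ← vexp_add_right]
      rw [sub_add_cancel, mul_comm]
    · rw [if_neg (by omega), if_neg h, mul_zero]
  rw [Finset.sum_congr rfl this, Finset.sum_ite_eq' , if_pos (by rw [Finset.mem_Icc]; omega)]

/-- Discrete Parseval identity for the Dirichlet kernel. -/
lemma sum_sq_dirichletKer (A M : ℕ) (hM : 2 * A < M) (s z : ℝ) :
    ∑ j ∈ Finset.range M, ‖dirichletKer A (z - (s + 2 * j / M))‖ ^ 2 = M * (2 * A + 1) := by
  have hc : ∀ t : ℝ, ((‖dirichletKer A t‖ ^ 2 : ℝ) : ℂ)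
      = ∑ m ∈ Finset.Icc (-(A : ℤ)) A, dirichletKer A t * vexp m (-t) := by
    intro t
    rw [← Finset.mul_sum]
    simp only [vexp_neg_right, ← map_sum]
    rw [← dirichletKer, Complex.mul_conj, Complex.normSq_eq_norm_sq]
  have hcast : ((∑ j ∈ Finset.range M, ‖dirichletKer A (z - (s + 2 * j / M))‖ ^ 2 : ℝ) : ℂ)
      = ((M * (2 * A + 1) : ℝ) : ℂ) := by
    rw [Complex.ofReal_sum]
    simp only [hc]
    rw [Finset.sum_comm]
    have : ∀ m ∈ Finset.Icc (-(A : ℤ)) A, ∑ j ∈ Finset.range M,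
        dirichletKer A (z - (s + 2 * j / M)) * vexp m (-(z - (s + 2 * j / M))) = M := by
      intro m hm
      rw [Finset.mem_Icc] at hm
      have h := dirichletKer_reproduce A M hM m (abs_le.mpr hm) s z
      have e : ∀ y : ℝ, vexp m (-(z - y)) = vexp m y * vexp m (-z) := by
        intro y; rw [← vexp_add_right]; congr 1; ring
      simp only [e, ← mul_assoc]
      rw [← Finset.sum_mul, h, mul_assoc, ← vexp_add_right, add_neg_cancel, vexp_zero_right,
        mul_one]
    rw [Finset.sum_congr rfl this, Finset.sum_const, Int.card_Icc, nsmul_eq_mul]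
    have : ((A : ℤ) + 1 - -(A : ℤ)).toNat = 2 * A + 1 := by omega
    rw [this]; push_cast; ring
  exact_mod_cast hcast

/-- The product of Dirichlet kernels of degrees `2N` and `N`, normalised so that its Fourier
coefficients equal `1` on `|n| ≤ N`. -/
noncomputable def vpKer (N : ℕ) (t : ℝ) : ℂ :=
  dirichletKer (2 * N) t * dirichletKer N t / (2 * N + 1)

lemma vpKer_reproduce (N : ℕ) (n : ℤ) (hn : |n| ≤ N) (s z : ℝ) :
    ∑ j ∈ Finset.range (4 * N + 1),
      vpKer N (z - (s + 2 * j / (4 * N + 1 : ℕ))) * vexp n (s + 2 * j / (4 * N + 1 : ℕ))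
      = ((4 * N + 1 : ℕ) : ℂ) * vexp n z := by
  have hn' := abs_le.mp hn
  set M := 4 * N + 1 with hMdef
  have hN : (2 * N + 1 : ℂ) ≠ 0 := by exact_mod_cast (by omega : 2 * N + 1 ≠ 0)
  have e : ∀ (l : ℤ) (y : ℝ), vexp l (z - y) * vexp n y = vexp l z * vexp (n - l) y := by
    intro l y; simp only [vexp, ← Complex.exp_add]; push_cast; ring_nf
  have h1 : ∀ y : ℝ, vpKer N (z - y) * vexp n y = (2 * N + 1 : ℂ)⁻¹ *
      ∑ l ∈ Finset.Icc (-(N : ℤ)) N,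
        vexp l z * (dirichletKer (2 * N) (z - y) * vexp (n - l) y) := by
    intro y
    have h2 : ∀ l : ℤ, vexp l z * (dirichletKer (2 * N) (z - y) * vexp (n - l) y)
        = dirichletKer (2 * N) (z - y) * vexp n y * vexp l (z - y) := by
      intro l; linear_combination (-dirichletKer (2 * N) (z - y)) * e l y
    simp only [h2, ← Finset.mul_sum]
    rw [← dirichletKer, vpKer]
    field_simp
  simp only [h1]
  rw [← Finset.mul_sum, Finset.sum_comm]
  have h3 : ∀ l ∈ Finset.Icc (-(N : ℤ)) N, ∑ j ∈ Finset.range M,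
      vexp l z * (dirichletKer (2 * N) (z - (s + 2 * j / M)) * vexp (n - l) (s + 2 * j / M))
      = M * vexp n z := by
    intro l hl
    rw [Finset.mem_Icc] at hl
    rw [← Finset.mul_sum, dirichletKer_reproduce (2 * N) M (by omega) (n - l)
      (by rw [abs_le]; push_cast; omega), mul_left_comm, ← vexp_add, add_sub_cancel]
  rw [Finset.sum_congr rfl h3, Finset.sum_const, Int.card_Icc, nsmul_eq_mul]
  have : ((N : ℤ) + 1 - -(N : ℤ)).toNat = 2 * N + 1 := by omega
  rw [this]; push_cast; field_simp

/-- Uniform discrete `L¹` bound for the kernel, from `|xy| ≤ (x² + y²)/2` and Parseval. -/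
lemma sum_norm_vpKer_le (N : ℕ) (s z : ℝ) :
    ∑ j ∈ Finset.range (4 * N + 1), ‖vpKer N (z - (s + 2 * j / (4 * N + 1 : ℕ)))‖
      ≤ 3 * (4 * N + 1 : ℕ) := by
  have h1 := sum_sq_dirichletKer (2 * N) (4 * N + 1) (by omega) s z
  have h2 := sum_sq_dirichletKer N (4 * N + 1) (by omega) s z
  set M := 4 * N + 1 with hMdef
  have hN : (0 : ℝ) < 2 * N + 1 := by positivity
  have hn : ‖(2 * N + 1 : ℂ)‖ = 2 * N + 1 := by
    have : (2 * N + 1 : ℂ) = ((2 * N + 1 : ℝ) : ℂ) := by push_cast; ring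
    rw [this, Complex.norm_real, Real.norm_of_nonneg hN.le]
  have h3 : ∀ t : ℝ, ‖vpKer N t‖ ≤
      (‖dirichletKer (2 * N) t‖ ^ 2 + ‖dirichletKer N t‖ ^ 2) / (2 * (2 * N + 1)) := by
    intro t
    rw [vpKer, norm_div, norm_mul, hn, div_le_div_iff₀ hN (by positivity)]
    nlinarith [sq_nonneg (‖dirichletKer (2 * N) t‖ - ‖dirichletKer N t‖)]
  refine (Finset.sum_le_sum fun j _ => h3 _).trans ?_
  rw [← Finset.sum_div, Finset.sum_add_distrib, h1, h2, div_le_iff₀ (by positivity)]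
  have : (0 : ℝ) ≤ M := by positivity
  push_cast
  nlinarith [mul_nonneg this (Nat.cast_nonneg N : (0:ℝ) ≤ N)]

/-! ### From grid samples to a uniform bound -/

/-- Averaging over the shift of the grid turns grid sums into an integral over `[-1,1]`. -/
lemma lintegral_grid_sum_le (G : ℝ → ℝ≥0∞) (hG : Measurable G) (M : ℕ) (hM : 0 < M) :
    ∫⁻ s in Ico (-1 : ℝ) (-1 + 2 / M), ∑ j ∈ Finset.range M, G (s + 2 * j / M)
      ≤ ∫⁻ z in Icc (-1 : ℝ) 1, G z := by
  have hM' : (0 : ℝ) < M := by exact_mod_cast hM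
  rw [lintegral_finsetSum _ fun j _ => by fun_prop]
  have key : ∀ k : ℕ, ∑ j ∈ Finset.range k,
      ∫⁻ s in Ico (-1 : ℝ) (-1 + 2 / M), G (s + 2 * j / M)
        = ∫⁻ z in Ico (-1 : ℝ) (-1 + 2 * k / M), G z := by
    intro k
    induction k with
    | zero => simp
    | succ k ih =>
      rw [Finset.sum_range_succ, ih]
      have h1 : Ico (-1 : ℝ) (-1 + 2 / M)
          = (fun x : ℝ => x + 2 * k / M) ⁻¹'
            Ico (-1 + 2 * k / M : ℝ) (-1 + 2 * (k + 1 : ℕ) / M : ℝ) := by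
        ext x
        have : (-1 + 2 * ((k + 1 : ℕ) : ℝ) / M) = -1 + 2 / M + 2 * k / M := by
          push_cast; ring
        simp only [mem_preimage, mem_Ico, this, add_le_add_iff_right, add_lt_add_iff_right]
      rw [h1, (measurePreserving_add_right volume (2 * (k : ℝ) / M)).setLIntegral_comp_preimage
        measurableSet_Ico hG, ← lintegral_union measurableSet_Ico]
      · rw [Ico_union_Ico_eq_Ico]
        · have : (0 : ℝ) ≤ 2 * k / M := by positivity
          linarith
        · push_cast; gcongr; linarith
      · exact Set.Ico_disjoint_Ico_same
  rw [key]
  apply lintegral_mono_set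
  rw [mul_div_assoc, div_self hM'.ne']
  norm_num
  exact Ico_subset_Icc_self

/-- Pointwise domination of `F` by its weighted grid samples bounds `F` uniformly by its
`L^ρ` norm. -/
lemma sup_bound_of_sampling (F : ℝ → ℝ≥0∞) (hF : Measurable F) (M : ℕ) (hM : 0 < M)
    (W : ℝ → ℝ → ℕ → ℝ≥0∞)
    (hW : ∀ s z, ∑ j ∈ Finset.range M, W s z j ≤ 3)
    (hS : ∀ s z, F z ≤ ∑ j ∈ Finset.range M, W s z j * F (s + 2 * j / M))
    (ρ : ℝ) (hρ : 1 ≤ ρ) (z : ℝ) :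
    F z ≤ 3 * ENNReal.ofReal (M / 2) ^ (1 / ρ)
      * (∫⁻ z in Icc (-1 : ℝ) 1, F z ^ ρ) ^ (1 / ρ) := by
  have hρ0 : 0 < ρ := by linarith
  have hM' : (0 : ℝ) < M := by exact_mod_cast hM
  have h1 : ∀ s, F z ^ ρ ≤ 3 ^ ρ * ∑ j ∈ Finset.range M, F (s + 2 * j / M) ^ ρ := by
    intro s
    set T := ∑ j ∈ Finset.range M, F (s + 2 * j / M) ^ ρ with hT
    have h2 : ∀ j ∈ Finset.range M, F (s + 2 * j / M) ≤ T ^ (1 / ρ) := by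
      intro j hj
      rw [one_div, ENNReal.le_rpow_inv_iff hρ0]
      exact Finset.single_le_sum (f := fun j : ℕ => F (s + 2 * j / M) ^ ρ)
        (fun _ _ => zero_le) hj
    have h3 : F z ≤ 3 * T ^ (1 / ρ) := by
      refine (hS s z).trans ?_
      refine (Finset.sum_le_sum fun j hj => mul_le_mul_right (h2 j hj) (W s z j)).trans ?_
      rw [← Finset.sum_mul]
      gcongr
      exact hW s z
    calc F z ^ ρ ≤ (3 * T ^ (1 / ρ)) ^ ρ := by gcongr
      _ = 3 ^ ρ * T := by
        rw [ENNReal.mul_rpow_of_nonneg _ _ hρ0.le, ← ENNReal.rpow_mul,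
          one_div_mul_cancel hρ0.ne', ENNReal.rpow_one]
  have h4 : F z ^ ρ * ENNReal.ofReal (2 / M) ≤ 3 ^ ρ * ∫⁻ z in Icc (-1 : ℝ) 1, F z ^ ρ := by
    calc F z ^ ρ * ENNReal.ofReal (2 / M)
        = ∫⁻ s in Ico (-1 : ℝ) (-1 + 2 / M), F z ^ ρ := by
          rw [setLIntegral_const, Real.volume_Ico]; congr 2; ring
      _ ≤ ∫⁻ s in Ico (-1 : ℝ) (-1 + 2 / M),
            3 ^ ρ * ∑ j ∈ Finset.range M, F (s + 2 * j / M) ^ ρ := lintegral_mono h1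
      _ = 3 ^ ρ * ∫⁻ s in Ico (-1 : ℝ) (-1 + 2 / M),
            ∑ j ∈ Finset.range M, F (s + 2 * j / M) ^ ρ := by
          rw [lintegral_const_mul]; fun_prop
      _ ≤ _ := by
          refine mul_le_mul_right ?_ _
          exact lintegral_grid_sum_le (fun z => F z ^ ρ) (by fun_prop) M hM
  have h5 : F z ^ ρ ≤ 3 ^ ρ * ENNReal.ofReal (M / 2) * ∫⁻ z in Icc (-1 : ℝ) 1, F z ^ ρ := by
    calc F z ^ ρ = F z ^ ρ * ENNReal.ofReal (2 / M) * ENNReal.ofReal (M / 2) := by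
          rw [mul_assoc, ← ENNReal.ofReal_mul (by positivity)]
          have : (2 / M * (M / 2) : ℝ) = 1 := by field_simp
          rw [this, ENNReal.ofReal_one, mul_one]
      _ ≤ (3 ^ ρ * ∫⁻ z in Icc (-1 : ℝ) 1, F z ^ ρ) * ENNReal.ofReal (M / 2) := by gcongr
      _ = _ := by ring
  rw [← ENNReal.le_rpow_inv_iff hρ0, ← one_div] at h5
  refine h5.trans_eq ?_
  rw [ENNReal.mul_rpow_of_nonneg _ _ (by positivity), ENNReal.mul_rpow_of_nonneg _ _ (by positivity),
    ← ENNReal.rpow_mul, mul_one_div_cancel hρ0.ne', ENNReal.rpow_one]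

lemma mixedLpNorm_eq_eLpNorm (p : ℝ≥0∞) (hp : 1 ≤ p) (f : ℝ × ℝ → ℂ) :
    mixedLpNorm (volume : Measure (ℝ × ℝ)) p (fun x => (‖f x‖₊ : ℝ≥0∞)) = eLpNorm f p volume := by
  unfold mixedLpNorm
  split_ifs with h
  · rw [h, eLpNorm_exponent_top]; rfl
  · rw [eLpNorm_eq_lintegral_rpow_enorm_toReal (by positivity) h]; rfl

/-- The `L^p_{x_h}` norm of a jointly measurable function is measurable in `z`; for `p = ∞`,
`essSup > t` means that a superlevel section has positive measure. -/
lemma measurable_mixedLpNorm_section (p : ℝ≥0∞) (u : (ℝ × ℝ) × ℝ → ℂ) (hu : Measurable u) :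
    Measurable fun z => mixedLpNorm (volume : Measure (ℝ × ℝ)) p
      fun xh => (‖u (xh, z)‖₊ : ℝ≥0∞) := by
  unfold mixedLpNorm
  split_ifs with h
  · refine measurable_of_Ioi fun t => ?_
    have hs : MeasurableSet {w : (ℝ × ℝ) × ℝ | t < (‖u w‖₊ : ℝ≥0∞)} :=
      measurableSet_lt measurable_const (by fun_prop)
    have hm := measurable_measure_prodMk_right (μ := (volume : Measure (ℝ × ℝ))) hs
    have : (fun z => essSup (fun xh => (‖u (xh, z)‖₊ : ℝ≥0∞)) volume) ⁻¹' Ioi t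
        = {z | (volume : Measure (ℝ × ℝ))
            ((fun x => (x, z)) ⁻¹' {w : (ℝ × ℝ) × ℝ | t < (‖u w‖₊ : ℝ≥0∞)}) = 0}ᶜ := by
      ext z
      simp only [mem_preimage, mem_Ioi, mem_compl_iff, mem_ofPred_eq, ← not_le]
      rw [not_iff_not]
      have hae : (∀ᵐ x ∂(volume : Measure (ℝ × ℝ)), (‖u (x, z)‖₊ : ℝ≥0∞) ≤ t) ↔
        (volume : Measure (ℝ × ℝ))
            ((fun x => (x, z)) ⁻¹' {w : (ℝ × ℝ) × ℝ | ¬ (‖u w‖₊ : ℝ≥0∞) ≤ t}) = 0 := ae_iff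
      rw [← hae]
      constructor
      · intro hle
        filter_upwards [ENNReal.ae_le_essSup fun xh => (‖u (xh, z)‖₊ : ℝ≥0∞)] with x hx
        exact hx.trans hle
      · intro hle
        exact essSup_le_of_ae_le t hle
    rw [this]
    exact (hm (measurableSet_singleton 0)).compl
  · refine Measurable.pow_const ?_ _
    exact Measurable.lintegral_prod_left' (f := fun w => (‖u w‖₊ : ℝ≥0∞) ^ p.toReal) (by fun_prop)

/-- Sampling inequality for the horizontal norm, by the reproducing formula and the triangle
inequality in `L^p`. -/
lemma eLpNorm_sampling (N : ℕ) (S : Finset ℤ) (hS : ∀ n ∈ S, |n| ≤ N)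
    (c : ℤ → (ℝ × ℝ) → ℂ) (hc : ∀ n, Measurable (c n)) (p : ℝ≥0∞) (hp : 1 ≤ p) (s z : ℝ) :
    eLpNorm (fun x => ∑ n ∈ S, c n x * vexp n z) p volume
      ≤ ∑ j ∈ Finset.range (4 * N + 1),
        ‖vpKer N (z - (s + 2 * j / (4 * N + 1 : ℕ))) / (4 * N + 1 : ℕ)‖ₑ
          * eLpNorm (fun x => ∑ n ∈ S, c n x * vexp n (s + 2 * j / (4 * N + 1 : ℕ))) p volume := by
  set M := 4 * N + 1 with hM
  have hM' : (M : ℂ) ≠ 0 := by exact_mod_cast (by omega : M ≠ 0)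
  have h : (fun x => ∑ n ∈ S, c n x * vexp n z) = ∑ j ∈ Finset.range M,
      (vpKer N (z - (s + 2 * j / M)) / M) •
        (fun x => ∑ n ∈ S, c n x * vexp n (s + 2 * j / M)) := by
    ext x
    simp only [Finset.sum_apply, Pi.smul_apply, smul_eq_mul, Finset.mul_sum]
    rw [Finset.sum_comm]
    refine Finset.sum_congr rfl fun n hn => ?_
    have hr := vpKer_reproduce N n (hS n hn) s z
    rw [← hM] at hr
    have : vexp n z = (M : ℂ)⁻¹ * (M * vexp n z) := by field_simp
    rw [this, ← hr, Finset.mul_sum, Finset.mul_sum]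
    exact Finset.sum_congr rfl fun j _ => by ring
  rw [h]
  refine (eLpNorm_sum_le (fun j _ => ?_) hp).trans ?_
  · refine Measurable.aestronglyMeasurable ?_
    refine Measurable.const_smul ?_ _
    exact Finset.measurable_fun_sum _ fun n _ => (hc n).mul_const _
  · exact Finset.sum_le_sum fun j _ => (eLpNorm_const_smul _ _ _ _).le

/-- Passing from the `L^ρ → L^∞` bound `F ≤ K` to the `L^ρ → L^σ` bound:
`∫ F^σ ≤ K^{σ-ρ} ∫ F^ρ`. -/
lemma interpolate_sup {α : Type*} [MeasurableSpace α] (μ : Measure α) (F : α → ℝ≥0∞)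
    (hF : Measurable F) (ρ σ : ℝ) (hρ : 1 ≤ ρ) (hσ : ρ ≤ σ) (L : ℝ≥0∞)
    (hL : ∀ x, F x ≤ L * (∫⁻ y, F y ^ ρ ∂μ) ^ (1 / ρ)) :
    (∫⁻ y, F y ^ σ ∂μ) ^ (1 / σ) ≤ L ^ (1 - ρ / σ) * (∫⁻ y, F y ^ ρ ∂μ) ^ (1 / ρ) := by
  have hρ0 : 0 < ρ := by linarith
  have hσ0 : 0 < σ := by linarith
  set T := (∫⁻ y, F y ^ ρ ∂μ) ^ (1 / ρ) with hT
  have hT' : ∫⁻ y, F y ^ ρ ∂μ = T ^ ρ := by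
    rw [hT, ← ENNReal.rpow_mul, one_div_mul_cancel hρ0.ne', ENNReal.rpow_one]
  have h1 : ∫⁻ y, F y ^ σ ∂μ ≤ L ^ (σ - ρ) * T ^ σ := by
    calc ∫⁻ y, F y ^ σ ∂μ ≤ ∫⁻ y, (L * T) ^ (σ - ρ) * F y ^ ρ ∂μ := by
          refine lintegral_mono fun y => ?_
          have : F y ^ σ = F y ^ (σ - ρ) * F y ^ ρ := by
            rw [← ENNReal.rpow_add_of_nonneg _ _ (by linarith) hρ0.le, sub_add_cancel]
          simp only [this]
          exact mul_le_mul_left (ENNReal.rpow_le_rpow (hL y) (by linarith)) _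
      _ = L ^ (σ - ρ) * T ^ σ := by
          rw [lintegral_const_mul _ (by fun_prop), hT', ENNReal.mul_rpow_of_nonneg _ _ (by linarith),
            mul_assoc, ← ENNReal.rpow_add_of_nonneg _ _ (by linarith) hρ0.le, sub_add_cancel]
  calc (∫⁻ y, F y ^ σ ∂μ) ^ (1 / σ) ≤ (L ^ (σ - ρ) * T ^ σ) ^ (1 / σ) := by gcongr
    _ = _ := by
      rw [ENNReal.mul_rpow_of_nonneg _ _ (by positivity), ← ENNReal.rpow_mul, ← ENNReal.rpow_mul,
        mul_one_div_cancel hσ0.ne', ENNReal.rpow_one]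
      congr 2; field_simp

/-! ### The inequality -/

/-- **Bernstein integrability-gain inequality for vertically band-limited functions**:
if the vertical Fourier support of `u` lies in the dyadic annulus `a·2^q ≤ |n| ≤ b·2^q`
and `1 ≤ r′ ≤ r ≤ ∞`, then `‖u‖_{L^r_z(L^p_h)} ≤ C 2^{q(1/r′−1/r)} ‖u‖_{L^{r′}_z(L^p_h)}`
for a constant `C` depending only on `a` and `b`. -/
theorem bernstein_vertical_integrability_gain (a b : ℝ) (ha : 0 < a) (hab : a < b) :
    ∃ C : ℝ, ∀ (p r' r : ℝ≥0∞), 1 ≤ p → 1 ≤ r' → r' ≤ r →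
      ∀ (q : ℕ) (S : Finset ℤ) (c : ℤ → (ℝ × ℝ) → ℂ),
      (∀ n ∈ S, a * 2 ^ q ≤ |(n : ℝ)| ∧ |(n : ℝ)| ≤ b * 2 ^ q) →
      (∀ n, Measurable (c n)) →
      ∀ u : (ℝ × ℝ) × ℝ → ℂ,
      (u = fun w => ∑ n ∈ S, c n w.1 * Complex.exp ((Real.pi : ℂ) * Complex.I * n * w.2)) →
      normLrVLpH r' p u < ∞ →
      normLrVLpH r p u
        ≤ ENNReal.ofReal (C * 2 ^ ((q : ℝ) * (1 / r'.toReal - 1 / r.toReal)))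
            * normLrVLpH r' p u := by
  have hb : 0 < b := ha.trans hab
  refine ⟨3 * (2 * b + 1), ?_⟩
  intro p r' r hp hr' hr q S c hS hc u hu _
  have hC1 : (1 : ℝ) ≤ 3 * (2 * b + 1) := by linarith
  by_cases hr'top : r' = ∞
  · have hrtop : r = ∞ := top_le_iff.mp (hr'top ▸ hr)
    subst hr'top hrtop
    refine le_mul_of_one_le_left zero_le ?_
    -- Both exponents are `∞`, so the power of `2` is `1` because `∞.toReal = 0`.
    rw [ENNReal.one_le_ofReal]
    simpa using hC1
  set ρ := r'.toReal with hρdef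
  have hρ : 1 ≤ ρ := by
    rw [hρdef, ← ENNReal.toReal_one]; exact ENNReal.toReal_mono hr'top hr'
  have hρ0 : 0 < ρ := by linarith
  set F : ℝ → ℝ≥0∞ := fun z => mixedLpNorm (volume : Measure (ℝ × ℝ)) p
    fun xh => (‖u (xh, z)‖₊ : ℝ≥0∞) with hFdef
  have hum : Measurable u := by
    rw [hu]
    refine Finset.measurable_fun_sum _ fun n _ => ?_
    exact ((hc n).comp measurable_fst).mul ((continuous_vexp n).measurable.comp measurable_snd)
  have hFm : Measurable F := measurable_mixedLpNorm_section p u hum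
  have hFe : ∀ z, F z = eLpNorm (fun x => ∑ n ∈ S, c n x * vexp n z) p volume := by
    intro z
    rw [hFdef, ← mixedLpNorm_eq_eLpNorm p hp, hu]
    rfl
  set N := ⌊b * 2 ^ q⌋₊ with hN
  have hSN : ∀ n ∈ S, |n| ≤ (N : ℤ) := by
    intro n hn
    have h1 := (hS n hn).2
    have h2 : ((n.natAbs : ℕ) : ℝ) ≤ b * 2 ^ q := by rwa [Nat.cast_natAbs, Int.cast_abs]
    have h3 : n.natAbs ≤ N := Nat.le_floor h2
    rw [Int.abs_eq_natAbs]; exact_mod_cast h3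
  have hNle : (N : ℝ) ≤ b * 2 ^ q := Nat.floor_le (by positivity)
  have hsup := sup_bound_of_sampling F hFm (4 * N + 1) (by omega)
    (fun s z j => ‖vpKer N (z - (s + 2 * j / (4 * N + 1 : ℕ))) / (4 * N + 1 : ℕ)‖ₑ)
    (by
      intro s z
      have hpos : (0 : ℝ) < (4 * N + 1 : ℕ) := by positivity
      simp only [← ofReal_norm]
      rw [← ENNReal.ofReal_sum_of_nonneg fun _ _ => norm_nonneg _]
      refine ENNReal.ofReal_le_of_le_toReal ?_
      simp only [norm_div, Complex.norm_natCast]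
      rw [← Finset.sum_div, div_le_iff₀ hpos]
      simpa using sum_norm_vpKer_le N s z)
    (by
      intro s z
      simp only [hFe]
      exact eLpNorm_sampling N S hSN c hc p hp s z)
    ρ hρ
  have hnr' : normLrVLpH r' p u = (∫⁻ z in Icc (-1 : ℝ) 1, F z ^ ρ) ^ (1 / ρ) := by
    rw [normLrVLpH, mixedLpNorm, if_neg hr'top]
  set L : ℝ := 3 * (2 * b + 1) * 2 ^ ((q : ℝ) * (1 / ρ)) with hL
  have hLb : ∀ z, F z ≤ ENNReal.ofReal L * (∫⁻ z in Icc (-1 : ℝ) 1, F z ^ ρ) ^ (1 / ρ) := by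
    intro z
    refine (hsup z).trans (mul_le_mul_left ?_ _)
    rw [ENNReal.ofReal_rpow_of_nonneg (by positivity) (by positivity),
      show (3 : ℝ≥0∞) = ENNReal.ofReal 3 by simp, ← ENNReal.ofReal_mul (by norm_num)]
    refine ENNReal.ofReal_le_ofReal ?_
    rw [hL, mul_assoc]
    refine mul_le_mul_of_nonneg_left ?_ (by norm_num)
    have h2q : (1 : ℝ) ≤ 2 ^ q := one_le_pow₀ (by norm_num)
    calc (((4 * N + 1 : ℕ) : ℝ) / 2) ^ (1 / ρ) ≤ ((2 * b + 1) * 2 ^ q) ^ (1 / ρ) := by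
          refine Real.rpow_le_rpow (by positivity) ?_ (by positivity)
          push_cast; nlinarith
      _ = (2 * b + 1) ^ (1 / ρ) * 2 ^ ((q : ℝ) * (1 / ρ)) := by
          rw [Real.mul_rpow (by positivity) (by positivity), Real.rpow_mul (by norm_num),
            Real.rpow_natCast]
      _ ≤ _ := by
          gcongr
          refine Real.rpow_le_self_of_one_le (by linarith) ?_
          rw [div_le_one hρ0]; exact hρ
  have hL0 : 0 ≤ L := by positivity
  rw [hnr']
  by_cases hrtop : r = ∞
  · subst hrtop
    rw [normLrVLpH, mixedLpNorm, if_pos rfl]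
    refine essSup_le_of_ae_le _ (Filter.Eventually.of_forall fun z => ?_)
    simpa [hL] using hLb z
  · set σ := r.toReal with hσdef
    have hσ : ρ ≤ σ := ENNReal.toReal_mono hrtop hr
    have hσ0 : 0 < σ := by linarith
    rw [normLrVLpH, mixedLpNorm, if_neg hrtop]
    refine (interpolate_sup _ F hFm ρ σ hρ hσ _ hLb).trans (mul_le_mul_left ?_ _)
    have h01 : ρ / σ ≤ 1 := (div_le_one hσ0).mpr hσ
    rw [ENNReal.ofReal_rpow_of_nonneg hL0 (by linarith)]
    refine ENNReal.ofReal_le_ofReal ?_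
    rw [hL, Real.mul_rpow (by positivity) (by positivity), ← Real.rpow_mul (by norm_num)]
    have he : (q : ℝ) * (1 / ρ) * (1 - ρ / σ) = q * (1 / ρ - 1 / σ) := by field_simp
    rw [he]
    gcongr
    refine Real.rpow_le_self_of_one_le hC1 ?_
    have : 0 ≤ ρ / σ := by positivity
    linarith
end

section
/- Anisotropic L⁴_h L^∞_v estimate for vertically band-limited functions: Let 0 < a < b. There exists a constant C, depending only on a and b, with the following property. Let q ∈ ℕ and let u(x_h, z) = ∑_{n ∈ ℤ, a·2^q ≤ |n| ≤ b·2^q} c_n(x_h) e^{iπ n z} be a finite trigonometric sum in the vertical variable z ∈ [−1,1], where each coefficient c_n : ℝ² → ℂ is a Schwartz function. Then ‖ x_h ↦ sup_{z ∈ [−1,1]} |u(x_h, z)| ‖_{L⁴(ℝ²)} ≤ C 2^{q/2} ‖u‖_{L²(ℝ²×[−1,1])}^{1/2} ‖∇_h u‖_{L²(ℝ²×[−1,1])}^{1/2}. -/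
open MeasureTheory Set

/-!
Write `G = ∑ ‖c n‖²` for the vertical energy of `u`. At most `(2b+1) 2^q` frequencies occur
(`card_band`), so Cauchy–Schwarz in `n` gives `sup_z |u|² ≤ (2b+1) 2^q G` pointwise in `x_h`, and it
suffices to bound `‖G‖_{L²(ℝ²)}`. The Gagliardo–Nirenberg–Sobolev inequality in the plane
(`sobolev_real`) gives `‖G‖_{L²} ≲ ‖∇G‖_{L¹}`, and
`‖∇G‖_{L¹}² ≤ 4 ‖G‖_{L¹} ∑ ‖∇ c n‖_{L²}²` (`integral_band_sq_deriv`). By Parseval in `z`, the two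
factors on the right are controlled by `‖u‖_{L²}²` (`parseval_trig`) and `‖∇_h u‖_{L²}²`
(`parseval_clm`).
-/

/-- The horizontal plane `ℝ²` with its Euclidean norm. -/
abbrev Plane : Type := EuclideanSpace ℝ (Fin 2)

open scoped ENNReal NNReal Topology

/-- The two-dimensional Gagliardo–Nirenberg–Sobolev inequality without compact support: it is
applied to the truncations `χ(x/(k+1)) G(x)`, whose gradients exceed that of `G` by at most
`O(1/(k+1)) |G|`, and Fatou's lemma gives the claim for `G`. -/
lemma sobolev_enorm : ∃ K : ℝ≥0, ∀ G : Plane → ℝ, ContDiff ℝ 1 G → Integrable G →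
    ∫⁻ x, ‖G x‖ₑ ^ 2 ≤ K * (∫⁻ x, ‖fderiv ℝ G x‖ₑ) ^ 2 := by
  refine ⟨lintegralPowLePowLIntegralFDerivConst (volume : Measure Plane) 2, fun G hG hGi => ?_⟩
  set K := lintegralPowLePowLIntegralFDerivConst (volume : Measure Plane) 2
  have hconj : Real.HolderConjugate (Module.finrank ℝ Plane) 2 := by
    rw [finrank_euclideanSpace_fin]; norm_num; exact Real.HolderConjugate.two_two
  let χ : ContDiffBump (0 : Plane) := ⟨1, 2, one_pos, one_lt_two⟩
  have hχ : ContDiff ℝ 1 (χ : Plane → ℝ) := χ.contDiff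
  obtain ⟨M, hM⟩ : ∃ M, ∀ x, ‖fderiv ℝ χ x‖ ≤ M :=
    (hχ.continuous_fderiv one_ne_zero).bounded_above_of_compact_support
      (χ.hasCompactSupport.fderiv ℝ)
  have hM0 : 0 ≤ M := (norm_nonneg _).trans (hM 0)
  let r : ℕ → ℝ := fun k => 1 / ((k : ℝ) + 1)
  have hr : ∀ k, 0 < r k := fun k => Nat.one_div_pos_of_nat
  have hr0 : Filter.Tendsto r Filter.atTop (𝓝 0) := tendsto_one_div_add_atTop_nhds_zero_nat
  let v : ℕ → Plane → ℝ := fun k x => χ (r k • x) * G x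
  have hχk : ∀ k, ContDiff ℝ 1 (fun x : Plane => χ (r k • x)) := fun k =>
    hχ.comp (contDiff_const_smul (r k))
  have hv : ∀ k, ContDiff ℝ 1 (v k) := fun k => (hχk k).mul hG
  have hvc : ∀ k, HasCompactSupport (v k) := fun k =>
    (χ.hasCompactSupport.comp_smul (hr k).ne').mul_right
  have hvd : ∀ k x, ‖fderiv ℝ (v k) x‖ₑ ≤
      ‖fderiv ℝ G x‖ₑ + ENNReal.ofReal (r k * M) * ‖G x‖ₑ := by
    intro k x
    have h1 : HasFDerivAt (fun x : Plane => χ (r k • x)) ((r k) • fderiv ℝ χ (r k • x)) x := by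
      have := ((hχ.differentiable one_ne_zero (r k • x)).hasFDerivAt).comp x
        ((hasFDerivAt_id x).const_smul (r k))
      have he : (fderiv ℝ χ (r k • x)).comp (r k • ContinuousLinearMap.id ℝ Plane) =
          r k • fderiv ℝ χ (r k • x) := by ext y; simp
      rw [← he]
      exact this
    have h2 := h1.mul (hG.differentiable one_ne_zero x).hasFDerivAt
    have h3 : ‖fderiv ℝ (v k) x‖ ≤ ‖fderiv ℝ G x‖ + (r k * M) * ‖G x‖ := by
      rw [show fderiv ℝ (v k) x = _ from h2.fderiv]
      refine (norm_add_le _ _).trans ?_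
      rw [norm_smul, norm_smul, norm_smul, Real.norm_of_nonneg χ.nonneg,
        Real.norm_of_nonneg (hr k).le]
      have := hM (r k • x)
      have := hr k
      have h5 : χ (r k • x) * ‖fderiv ℝ G x‖ ≤ 1 * ‖fderiv ℝ G x‖ := by
        gcongr; exact χ.le_one
      have h6 : ‖G x‖ * (r k * ‖fderiv ℝ χ (r k • x)‖) ≤ ‖G x‖ * (r k * M) := by gcongr
      linarith
    have h4 := ENNReal.ofReal_le_ofReal h3
    rwa [ENNReal.ofReal_add (norm_nonneg _) (by have := hr k; positivity),
      ENNReal.ofReal_mul (by have := hr k; positivity), ofReal_norm, ofReal_norm,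
      ofReal_norm] at h4
  have hlim : ∀ x, Filter.liminf (fun k => ‖v k x‖ₑ ^ 2) Filter.atTop = ‖G x‖ₑ ^ 2 := by
    intro x
    apply Filter.Tendsto.liminf_eq
    apply Filter.Tendsto.congr' _ tendsto_const_nhds
    have : Filter.Tendsto (fun k => r k • x) Filter.atTop (𝓝 0) := by
      simpa using hr0.smul_const x
    filter_upwards [this.eventually χ.eventuallyEq_one] with k hk
    simp only [v, hk, Pi.one_apply, one_mul]
  have hD : Measurable fun x => ‖fderiv ℝ G x‖ₑ :=
    (hG.continuous_fderiv one_ne_zero).enorm.measurable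
  have hstep : ∀ k, ∫⁻ x, ‖v k x‖ₑ ^ 2 ≤
      K * ((∫⁻ x, ‖fderiv ℝ G x‖ₑ) + ENNReal.ofReal (r k * M) * ∫⁻ x, ‖G x‖ₑ) ^ 2 := by
    intro k
    have h := lintegral_pow_le_pow_lintegral_fderiv (volume : Measure Plane) (hv k) (hvc k) hconj
    simp only [ENNReal.rpow_two] at h
    refine h.trans ?_
    gcongr
    rw [← lintegral_const_mul _ hG.continuous.enorm.measurable, ← lintegral_add_left hD]
    exact lintegral_mono (hvd k)
  calc ∫⁻ x, ‖G x‖ₑ ^ 2 = ∫⁻ x, Filter.liminf (fun k => ‖v k x‖ₑ ^ 2) Filter.atTop := by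
        simp_rw [hlim]
    _ ≤ Filter.liminf (fun k => ∫⁻ x, ‖v k x‖ₑ ^ 2) Filter.atTop :=
        lintegral_liminf_le fun k => (hv k).continuous.enorm.measurable.pow_const 2
    _ ≤ Filter.liminf (fun k => K * ((∫⁻ x, ‖fderiv ℝ G x‖ₑ) +
          ENNReal.ofReal (r k * M) * ∫⁻ x, ‖G x‖ₑ) ^ 2) Filter.atTop :=
        Filter.liminf_le_liminf (Filter.Eventually.of_forall hstep)
    _ = K * (∫⁻ x, ‖fderiv ℝ G x‖ₑ) ^ 2 := by
        apply Filter.Tendsto.liminf_eq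
        have h1 : Filter.Tendsto (fun k => ENNReal.ofReal (r k * M) * ∫⁻ x, ‖G x‖ₑ)
            Filter.atTop (𝓝 0) := by
          have := ENNReal.Tendsto.mul_const (b := ∫⁻ x, ‖G x‖ₑ)
            (ENNReal.tendsto_ofReal (hr0.mul_const M)) (Or.inr hGi.2.ne)
          simpa using this
        have h2 := ENNReal.Tendsto.pow (n := 2) (h1.const_add (∫⁻ x, ‖fderiv ℝ G x‖ₑ))
        rw [add_zero] at h2
        exact ENNReal.Tendsto.const_mul h2 (Or.inr ENNReal.coe_ne_top)

lemma sobolev_real : ∃ K : ℝ, 0 ≤ K ∧ ∀ G : Plane → ℝ, ContDiff ℝ 1 G → Integrable G →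
    Integrable (fderiv ℝ G) →
    Integrable (fun x => G x ^ 2) ∧ ∫ x, G x ^ 2 ≤ K * (∫ x, ‖fderiv ℝ G x‖) ^ 2 := by
  obtain ⟨K, hK⟩ := sobolev_enorm
  refine ⟨K, K.2, fun G hG hGi hDi => ?_⟩
  have h := hK G hG hGi
  have hfin : K * (∫⁻ x, ‖fderiv ℝ G x‖ₑ) ^ 2 ≠ ⊤ :=
    ENNReal.mul_ne_top ENNReal.coe_ne_top (ENNReal.pow_ne_top hDi.2.ne)
  have he : ∀ x, ‖G x ^ 2‖ₑ = ‖G x‖ₑ ^ 2 := fun x => by rw [enorm_pow]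
  constructor
  · refine ⟨(hG.continuous.pow 2).aestronglyMeasurable, ?_⟩
    rw [hasFiniteIntegral_iff_enorm]
    simp_rw [he]
    exact h.trans_lt hfin.lt_top
  · have h1 : ∫ x, G x ^ 2 = (∫⁻ x, ‖G x‖ₑ ^ 2).toReal := by
      have h2 := integral_norm_eq_lintegral_enorm (μ := volume) (f := fun x => G x ^ 2)
        (hG.continuous.pow 2).aestronglyMeasurable
      simp_rw [he] at h2
      rw [← h2]
      simp
    rw [h1, integral_norm_eq_lintegral_enorm hDi.1]
    have := ENNReal.toReal_mono hfin h
    simpa using this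

/-- Parseval's identity for finite trigonometric sums on `[-1, 1]`; the factor `2` is the length
of the interval. -/
lemma parseval_trig (S : Finset ℤ) (d : ℤ → ℂ) :
    ∫ z in Icc (-1:ℝ) 1, ‖∑ n ∈ S, d n * Complex.exp ((Real.pi : ℂ) * Complex.I * n * z)‖ ^ 2
      = 2 * ∑ n ∈ S, ‖d n‖ ^ 2 := by
  have horth : ∀ n m : ℤ, ∫ z in (-1:ℝ)..1,
      Complex.exp ((Real.pi : ℂ) * Complex.I * ((n : ℂ) - m) * z) = if n = m then 2 else 0 := by
    intro n m
    split_ifs with h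
    · subst h; norm_num
    · have hnm : ((n : ℂ) - m) ≠ 0 := sub_ne_zero.2 (by exact_mod_cast h)
      have hc : (Real.pi : ℂ) * Complex.I * ((n : ℂ) - m) ≠ 0 :=
        mul_ne_zero (mul_ne_zero (by exact_mod_cast Real.pi_ne_zero) Complex.I_ne_zero) hnm
      rw [integral_exp_mul_complex hc, div_eq_zero_iff]
      left
      rw [sub_eq_zero, Complex.exp_eq_exp_iff_exists_int]
      refine ⟨n - m, ?_⟩
      push_cast
      ring
  have hexp : ∀ z : ℝ, ((‖∑ n ∈ S, d n * Complex.exp ((Real.pi : ℂ) * Complex.I * n * z)‖ ^ 2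
      : ℝ) : ℂ) = ∑ n ∈ S, ∑ m ∈ S, (d n * starRingEnd ℂ (d m)) *
        Complex.exp ((Real.pi : ℂ) * Complex.I * ((n : ℂ) - m) * z) := by
    intro z
    push_cast
    rw [← Complex.mul_conj', map_sum, Finset.sum_mul_sum]
    refine Finset.sum_congr rfl fun n _ => Finset.sum_congr rfl fun m _ => ?_
    rw [map_mul, ← Complex.exp_conj, mul_mul_mul_comm, ← Complex.exp_add]
    congr 2
    simp only [map_mul, Complex.conj_ofReal, Complex.conj_I, map_intCast]
    ring
  rw [integral_Icc_eq_integral_Ioc, ← intervalIntegral.integral_of_le (by norm_num)]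
  apply Complex.ofReal_injective
  rw [← intervalIntegral.integral_ofReal]
  simp_rw [hexp]
  rw [intervalIntegral.integral_finsetSum
    (fun n _ => Continuous.intervalIntegrable (by fun_prop) _ _)]
  push_cast
  rw [Finset.mul_sum]
  refine Finset.sum_congr rfl fun n hn => ?_
  rw [intervalIntegral.integral_finsetSum
    (fun n _ => Continuous.intervalIntegrable (by fun_prop) _ _)]
  simp_rw [intervalIntegral.integral_const_mul, horth]
  simp only [mul_ite, mul_zero, Finset.sum_ite_eq, hn, if_true, Complex.mul_conj']
  ring

/-- The operator norm is at most the Hilbert–Schmidt norm. -/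
lemma clm_norm_sq_le (T : Plane →L[ℝ] ℂ) :
    ‖T‖ ^ 2 ≤ ∑ j : Fin 2, ‖T (EuclideanSpace.single j 1)‖ ^ 2 := by
  refine (Real.le_sqrt (norm_nonneg _) (by positivity)).1 ?_
  refine T.opNorm_le_bound (Real.sqrt_nonneg _) fun x => ?_
  have hx : x = ∑ j : Fin 2, x j • EuclideanSpace.single j (1:ℝ) := by
    ext i; fin_cases i <;> simp
  have h1 : ‖T x‖ ≤ ∑ j : Fin 2, ‖T (EuclideanSpace.single j 1)‖ * ‖x j‖ := by
    conv_lhs => rw [hx, map_sum]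
    refine (norm_sum_le _ _).trans (Finset.sum_le_sum fun j _ => ?_)
    rw [map_smul, norm_smul, mul_comm]
  refine h1.trans ((Real.sum_mul_le_sqrt_mul_sqrt _ _ _).trans_eq ?_)
  rw [EuclideanSpace.norm_eq]

/-- One half of Parseval for operator-valued coefficients. The operator norm is not Hilbertian, so
the identity is applied to each of the two partial derivatives; the loss of a factor `2` between
the operator and Hilbert–Schmidt norms is compensated by the length of `[-1, 1]`. -/
lemma parseval_clm (S : Finset ℤ) (T : ℤ → Plane →L[ℝ] ℂ) :
    ∑ n ∈ S, ‖T n‖ ^ 2 ≤ ∫ z in Icc (-1:ℝ) 1,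
      ‖∑ n ∈ S, Complex.exp ((Real.pi : ℂ) * Complex.I * n * z) • T n‖ ^ 2 := by
  set U : ℝ → Plane →L[ℝ] ℂ := fun z =>
    ∑ n ∈ S, Complex.exp ((Real.pi : ℂ) * Complex.I * n * z) • T n with hU
  have hUc : Continuous U := by rw [hU]; fun_prop
  have key : ∀ j : Fin 2, 2 * ∑ n ∈ S, ‖T n (EuclideanSpace.single j 1)‖ ^ 2 ≤
      ∫ z in Icc (-1:ℝ) 1, ‖U z‖ ^ 2 := by
    intro j
    rw [← parseval_trig]
    refine integral_mono_of_nonneg (Filter.Eventually.of_forall fun z => by positivity)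
      ((hUc.norm.pow 2).integrableOn_Icc) (Filter.Eventually.of_forall fun z => ?_)
    have h1 := (U z).le_opNorm (EuclideanSpace.single j 1)
    rw [PiLp.norm_single, norm_one, mul_one] at h1
    have h2 : U z (EuclideanSpace.single j 1) = ∑ n ∈ S, T n (EuclideanSpace.single j 1) *
        Complex.exp ((Real.pi : ℂ) * Complex.I * n * z) := by
      simp [hU, mul_comm]
    rw [h2] at h1
    dsimp only
    gcongr
  have h0 := key 0
  have h1 := key 1
  have h2 : ∑ n ∈ S, ‖T n‖ ^ 2 ≤ ∑ n ∈ S, (‖T n (EuclideanSpace.single 0 1)‖ ^ 2 +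
      ‖T n (EuclideanSpace.single 1 1)‖ ^ 2) :=
    Finset.sum_le_sum fun n _ => by simpa [Fin.sum_univ_two] using clm_norm_sq_le (T n)
  rw [Finset.sum_add_distrib] at h2
  linarith

lemma card_band (b : ℝ) (hb : 0 ≤ b) (q : ℕ) (S : Finset ℤ)
    (hS : ∀ n ∈ S, |(n : ℝ)| ≤ b * 2 ^ q) : (S.card : ℝ) ≤ (2 * b + 1) * 2 ^ q := by
  have hsub : S ⊆ Finset.Icc (-⌊b * 2 ^ q⌋) ⌊b * 2 ^ q⌋ := by
    intro n hn
    obtain ⟨h1, h2⟩ := abs_le.1 (hS n hn)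
    rw [Finset.mem_Icc]
    refine ⟨?_, Int.le_floor.2 h2⟩
    rw [neg_le]
    exact Int.le_floor.2 (by push_cast; linarith)
  have h1 := Finset.card_le_card hsub
  rw [Int.card_Icc] at h1
  have h0 : 0 ≤ ⌊b * 2 ^ q⌋ := Int.floor_nonneg.2 (by positivity)
  have h2 : (S.card : ℤ) ≤ 2 * ⌊b * 2 ^ q⌋ + 1 := by omega
  have h3 : (S.card : ℝ) ≤ 2 * (⌊b * 2 ^ q⌋ : ℝ) + 1 := by exact_mod_cast h2
  have h4 := Int.floor_le (b * 2 ^ q)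
  have h5 : (1 : ℝ) ≤ 2 ^ q := one_le_pow₀ (by norm_num)
  nlinarith

/-- Since `|∇ ∑ ‖c n‖²| ≤ 2 ∑ ‖c n‖ ‖∇ c n‖`, Young's inequality with weight `t` gives this form of
the Cauchy–Schwarz estimate, valid for every real `t` and quadratic in `t`. -/
lemma band_sq_deriv (S : Finset ℤ) (c : ℤ → SchwartzMap Plane ℂ) (x : Plane) (t : ℝ) :
    t * ‖fderiv ℝ (fun x => ∑ n ∈ S, ‖c n x‖ ^ 2) x‖ ≤
      t ^ 2 * ∑ n ∈ S, ‖c n x‖ ^ 2 + ∑ n ∈ S, ‖fderiv ℝ (c n) x‖ ^ 2 := by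
  have h1 : HasFDerivAt (fun x => ∑ n ∈ S, ‖c n x‖ ^ 2)
      (∑ n ∈ S, 2 • (innerSL ℝ (c n x)).comp (fderiv ℝ (c n) x)) x :=
    HasFDerivAt.fun_sum fun n _ => ((c n).differentiableAt.hasFDerivAt).norm_sq
  have h2 : ‖fderiv ℝ (fun x => ∑ n ∈ S, ‖c n x‖ ^ 2) x‖ ≤
      ∑ n ∈ S, 2 * (‖c n x‖ * ‖fderiv ℝ (c n) x‖) := by
    rw [h1.fderiv]
    refine (norm_sum_le _ _).trans (Finset.sum_le_sum fun n _ => ?_)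
    refine (norm_nsmul_le).trans ?_
    push_cast
    gcongr
    refine (ContinuousLinearMap.opNorm_comp_le _ _).trans_eq ?_
    rw [innerSL_apply_norm]
  rcases le_total t 0 with ht | ht
  · exact (mul_nonpos_of_nonpos_of_nonneg ht (norm_nonneg _)).trans (by positivity)
  refine (mul_le_mul_of_nonneg_left h2 ht).trans ?_
  rw [Finset.mul_sum, Finset.mul_sum, ← Finset.sum_add_distrib]
  refine Finset.sum_le_sum fun n _ => ?_
  nlinarith [sq_nonneg (t * ‖c n x‖ - ‖fderiv ℝ (c n) x‖)]

/-- Regularity and integrability of `G = ∑ ‖c n‖²`, and the bound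
`‖∇G‖_{L¹}² ≤ 4 ‖G‖_{L¹} ∑ ‖∇ c n‖_{L²}²`. -/
lemma integral_band_sq_deriv (S : Finset ℤ) (c : ℤ → SchwartzMap Plane ℂ) :
    Integrable (fun x => ∑ n ∈ S, ‖c n x‖ ^ 2) ∧
    Integrable (fun x => ∑ n ∈ S, ‖fderiv ℝ (c n) x‖ ^ 2) ∧
    ContDiff ℝ 1 (fun x => ∑ n ∈ S, ‖c n x‖ ^ 2) ∧
    Integrable (fderiv ℝ (fun x => ∑ n ∈ S, ‖c n x‖ ^ 2)) ∧
    (∫ x, ‖fderiv ℝ (fun x => ∑ n ∈ S, ‖c n x‖ ^ 2) x‖) ^ 2 ≤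
      4 * (∫ x, ∑ n ∈ S, ‖c n x‖ ^ 2) * ∫ x, ∑ n ∈ S, ‖fderiv ℝ (c n) x‖ ^ 2 := by
  have hG : Integrable (fun x => ∑ n ∈ S, ‖c n x‖ ^ 2) :=
    integrable_finsetSum _ fun n _ => ((c n).memLp 2).integrable_norm_pow two_ne_zero
  have hH : Integrable (fun x => ∑ n ∈ S, ‖fderiv ℝ (c n) x‖ ^ 2) :=
    integrable_finsetSum _ fun n _ =>
      ((SchwartzMap.fderivCLM ℝ Plane ℂ (c n)).memLp 2 volume).integrable_norm_pow two_ne_zero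
  have hC : ContDiff ℝ 1 (fun x => ∑ n ∈ S, ‖c n x‖ ^ 2) :=
    ContDiff.sum fun n _ => ((c n).smooth 1).norm_sq ℝ
  have hD : Integrable (fderiv ℝ (fun x => ∑ n ∈ S, ‖c n x‖ ^ 2)) := by
    refine (hG.add hH).mono' (hC.continuous_fderiv one_ne_zero).aestronglyMeasurable
      (Filter.Eventually.of_forall fun x => ?_)
    simpa using band_sq_deriv S c x 1
  refine ⟨hG, hH, hC, hD, ?_⟩
  -- Integrating the pointwise bound gives a nonnegative quadratic polynomial in `t`; the claim is
  -- that its discriminant is nonpositive.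
  have h : ∀ t : ℝ, 0 ≤ (∫ x, ∑ n ∈ S, ‖c n x‖ ^ 2) * (t * t) +
      (-∫ x, ‖fderiv ℝ (fun x => ∑ n ∈ S, ‖c n x‖ ^ 2) x‖) * t +
      ∫ x, ∑ n ∈ S, ‖fderiv ℝ (c n) x‖ ^ 2 := by
    intro t
    have := integral_mono (hD.norm.const_mul t) ((hG.const_mul (t ^ 2)).add hH)
      (fun x => band_sq_deriv S c x t)
    simp only [Pi.add_apply] at this
    rw [integral_const_mul, integral_add (hG.const_mul _) hH, integral_const_mul] at this
    linarith
  have := discrim_le_zero h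
  rw [discrim] at this
  linarith

lemma horizontal_fderiv (S : Finset ℤ) (c : ℤ → SchwartzMap Plane ℂ) (x : Plane) (z : ℝ) :
    fderiv ℝ (fun w => ∑ n ∈ S, c n w * Complex.exp ((Real.pi : ℂ) * Complex.I * n * z)) x =
      ∑ n ∈ S, Complex.exp ((Real.pi : ℂ) * Complex.I * n * z) • fderiv ℝ (c n) x :=
  (HasFDerivAt.fun_sum fun n _ => ((c n).differentiableAt.hasFDerivAt).mul_const _).fderiv

lemma norm_exp_vertical (n : ℤ) (z : ℝ) :
    ‖Complex.exp ((Real.pi : ℂ) * Complex.I * n * z)‖ = 1 := by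
  rw [Complex.norm_exp]
  simp

/-- The vertical energy density of the horizontal gradient is integrable over the plane, so that the
outer Bochner integral of the gradient term is a genuine value and not the default `0`. -/
lemma integrable_vertical_energy (S : Finset ℤ) (c : ℤ → SchwartzMap Plane ℂ) :
    Integrable fun x => ∫ z in Icc (-1:ℝ) 1,
      ‖∑ n ∈ S, Complex.exp ((Real.pi : ℂ) * Complex.I * n * z) • fderiv ℝ (c n) x‖ ^ 2 := by
  have hc : ∀ n, Continuous (fderiv ℝ (c n)) := fun n =>
    ((c n).smooth 1).continuous_fderiv one_ne_zero
  have hcont : Continuous (fun p : Plane × ℝ =>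
      ‖∑ n ∈ S, Complex.exp ((Real.pi : ℂ) * Complex.I * n * p.2) • fderiv ℝ (c n) p.1‖ ^ 2) := by
    have := fun n => (hc n).comp (continuous_fst (X := Plane) (Y := ℝ))
    simp only [Function.comp_def] at this
    fun_prop
  have hmeas := (continuous_parametric_integral_of_continuous (μ := (volume : Measure ℝ))
    (f := fun (x : Plane) (z : ℝ) =>
      ‖∑ n ∈ S, Complex.exp ((Real.pi : ℂ) * Complex.I * n * z) • fderiv ℝ (c n) x‖ ^ 2)
    hcont (isCompact_Icc (a := (-1:ℝ)) (b := 1)))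
  refine (((integral_band_sq_deriv S c).2.1).const_mul (2 * S.card)).mono'
    hmeas.aestronglyMeasurable (Filter.Eventually.of_forall fun x => ?_)
  rw [Real.norm_of_nonneg (integral_nonneg fun z => by positivity)]
  have hb : ∀ z : ℝ, ‖∑ n ∈ S, Complex.exp ((Real.pi : ℂ) * Complex.I * n * z) •
      fderiv ℝ (c n) x‖ ^ 2 ≤ S.card * ∑ n ∈ S, ‖fderiv ℝ (c n) x‖ ^ 2 := by
    intro z
    have h1 : ‖∑ n ∈ S, Complex.exp ((Real.pi : ℂ) * Complex.I * n * z) •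
        fderiv ℝ (c n) x‖ ≤ ∑ n ∈ S, ‖fderiv ℝ (c n) x‖ := by
      refine (norm_sum_le _ _).trans_eq (Finset.sum_congr rfl fun n _ => ?_)
      rw [norm_smul, norm_exp_vertical, one_mul]
    exact (pow_le_pow_left₀ (norm_nonneg _) h1 2).trans sq_sum_le_card_mul_sum_sq
  refine (integral_mono_of_nonneg (Filter.Eventually.of_forall fun z => by positivity)
    (integrable_const _) (Filter.Eventually.of_forall hb)).trans_eq ?_
  simp
  ring

/-- **Anisotropic `L⁴_h(L^∞_v)` estimate for vertically band-limited functions**: if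
the vertical Fourier support of `u` lies in the dyadic annulus `a·2^q ≤ |n| ≤ b·2^q`,
then `‖ sup_{z∈[−1,1]} |u| ‖_{L⁴(ℝ²)} ≤ C 2^{q/2} ‖u‖_{L²}^{1/2} ‖∇_h u‖_{L²}^{1/2}`
for a constant `C` depending only on `a` and `b`. -/
theorem anisotropic_L4h_Linfv (a b : ℝ) (ha : 0 < a) (hab : a < b) :
    ∃ C : ℝ, ∀ (q : ℕ) (S : Finset ℤ)
      (c : ℤ → SchwartzMap (EuclideanSpace ℝ (Fin 2)) ℂ),
      (∀ n ∈ S, a * 2 ^ q ≤ |(n : ℝ)| ∧ |(n : ℝ)| ≤ b * 2 ^ q) →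
      ∀ u : EuclideanSpace ℝ (Fin 2) × ℝ → ℂ,
      (u = fun w => ∑ n ∈ S, c n w.1 * Complex.exp ((Real.pi : ℂ) * Complex.I * n * w.2)) →
      (∫ xh : EuclideanSpace ℝ (Fin 2),
          (⨆ z : Icc (-1:ℝ) 1, ‖u (xh, (z : ℝ))‖) ^ 4) ^ ((1:ℝ)/4)
        ≤ C * 2 ^ ((q : ℝ) / 2) *
          ((∫ xh : EuclideanSpace ℝ (Fin 2), ∫ z in Icc (-1:ℝ) 1,
              ‖u (xh, z)‖ ^ 2) ^ ((1:ℝ)/2)) ^ ((1:ℝ)/2) *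
          ((∫ xh : EuclideanSpace ℝ (Fin 2), ∫ z in Icc (-1:ℝ) 1,
              ‖fderiv ℝ (fun w => u (w, z)) xh‖ ^ 2) ^ ((1:ℝ)/2)) ^ ((1:ℝ)/2) := by
  
  obtain ⟨K, hK0, hK⟩ := sobolev_real
  refine ⟨(2 * b + 1) ^ ((1:ℝ)/2) * (2 * K) ^ ((1:ℝ)/4), ?_⟩
  rintro q S c hS u rfl
  obtain ⟨hG, hH, hC, hD, hI⟩ := integral_band_sq_deriv S c
  obtain ⟨hG2, hGN⟩ := hK _ hC hG hD
  have hb : 0 < b := ha.trans hab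
  have hN := card_band b hb.le q S fun n hn => (hS n hn).2
  simp only [horizontal_fderiv, parseval_trig, integral_const_mul]
  set A := ∫ x, ∑ n ∈ S, ‖c n x‖ ^ 2 with hA
  set B := ∫ x, ∑ n ∈ S, ‖fderiv ℝ (c n) x‖ ^ 2 with hB
  set B' := ∫ x, ∫ z in Icc (-1:ℝ) 1,
    ‖∑ n ∈ S, Complex.exp ((Real.pi : ℂ) * Complex.I * n * z) • fderiv ℝ (c n) x‖ ^ 2 with hB'
  have hA0 : 0 ≤ A := integral_nonneg fun x => by positivity
  have hB0 : 0 ≤ B := integral_nonneg fun x => by positivity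
  have hBB : B ≤ B' := integral_mono hH (integrable_vertical_energy S c)
    fun x => parseval_clm S fun n => fderiv ℝ (c n) x
  have hB'0 : 0 ≤ B' := hB0.trans hBB
  have hsup : ∀ x : Plane, (⨆ z : Icc (-1:ℝ) 1, ‖∑ n ∈ S, c n x *
      Complex.exp ((Real.pi : ℂ) * Complex.I * n * ((z : ℝ) : ℂ))‖) ^ 4 ≤
      (S.card : ℝ) ^ 2 * (∑ n ∈ S, ‖c n x‖ ^ 2) ^ 2 := by
    intro x
    have h0 : 0 ≤ ⨆ z : Icc (-1:ℝ) 1, ‖∑ n ∈ S, c n x *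
      Complex.exp ((Real.pi : ℂ) * Complex.I * n * ((z : ℝ) : ℂ))‖ :=
      Real.iSup_nonneg fun z => norm_nonneg _
    have h1 : (⨆ z : Icc (-1:ℝ) 1, ‖∑ n ∈ S, c n x *
        Complex.exp ((Real.pi : ℂ) * Complex.I * n * ((z : ℝ) : ℂ))‖) ≤ ∑ n ∈ S, ‖c n x‖ := by
      refine Real.iSup_le (fun z => ?_) (by positivity)
      refine (norm_sum_le _ _).trans_eq (Finset.sum_congr rfl fun n _ => ?_)
      rw [norm_mul, norm_exp_vertical, mul_one]
    have h2 := (pow_le_pow_left₀ h0 h1 2).trans sq_sum_le_card_mul_sum_sq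
    have h3 := pow_le_pow_left₀ (by positivity) h2 2
    rw [← pow_mul, mul_pow] at h3
    exact h3
  have hmain : (∫ x : Plane, (⨆ z : Icc (-1:ℝ) 1, ‖∑ n ∈ S, c n x *
      Complex.exp ((Real.pi : ℂ) * Complex.I * n * ((z : ℝ) : ℂ))‖) ^ 4) ≤
      ((2 * b + 1) * 2 ^ q) ^ 2 * (2 * K) * (2 * A) * B' := by
    calc _ ≤ ∫ x, (S.card : ℝ) ^ 2 * (∑ n ∈ S, ‖c n x‖ ^ 2) ^ 2 :=
          integral_mono_of_nonneg (Filter.Eventually.of_forall fun x =>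
            pow_nonneg (Real.iSup_nonneg fun z => norm_nonneg _) 4)
            (hG2.const_mul _) (Filter.Eventually.of_forall hsup)
      _ = (S.card : ℝ) ^ 2 * ∫ x, (∑ n ∈ S, ‖c n x‖ ^ 2) ^ 2 := integral_const_mul _ _
      _ ≤ ((2 * b + 1) * 2 ^ q) ^ 2 * (K * (4 * A * B')) := by
          gcongr
          exact hGN.trans (by gcongr; exact hI.trans (by gcongr))
      _ = _ := by ring
  refine (Real.rpow_le_rpow (integral_nonneg fun x =>
    pow_nonneg (Real.iSup_nonneg fun z => norm_nonneg _) 4) hmain (by norm_num)).trans_eq ?_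
  rw [Real.mul_rpow (by positivity) hB'0, Real.mul_rpow (by positivity) (by positivity),
    Real.mul_rpow (by positivity) (by positivity), ← Real.rpow_mul (by positivity),
    ← Real.rpow_mul hB'0, ← Real.rpow_natCast, ← Real.rpow_mul (by positivity),
    Real.mul_rpow (by positivity) (by positivity), ← Real.rpow_natCast 2 q,
    ← Real.rpow_mul (by norm_num)]
  rw [show ((2 : ℕ) : ℝ) * (1 / 4) = 1 / 2 by norm_num,
    show (1 : ℝ) / 2 * (1 / 2) = 1 / 4 by norm_num, show (q : ℝ) * (1 / 2) = q / 2 by ring]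
  ring
end
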